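/- There is no C² formula φ(x) with one free variable over the signature with binary relation symbol E and unary predicate symbols P₁, P₂, P₃ such that for every finite undirected labelled graph H of dimension 3 and every node v of H: H ⊨ φ(v) if and only if H is isomorphic to gad(G) for some strict linear order G. -/

import Mathlib

/-- The two variables of the logic `C²`. -/
inductive C2Var : Type
  | x : C2Var
  | y : C2Var
deriving DecidableEq

/-- Formulas of `C²`, the two-variable fragment of first-order logic with counting, over
the signature with one binary relation symbol `E` and unary predicates `P₁,…,P_d`.
`exN k v φ` is the counting quantifier `∃_k v. φ` ("at least `k` elements"). -/
inductive C2 (d : ℕ) : Type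
  | eq : C2Var → C2Var → C2 d
  | edge : C2Var → C2Var → C2 d
  | pred : Fin d → C2Var → C2 d
  | not : C2 d → C2 d
  | and : C2 d → C2 d → C2 d
  | or : C2 d → C2 d → C2 d
  | exN : ℕ → C2Var → C2 d → C2 d

/-- Satisfaction of a `C²` formula in a finite directed labelled graph `(V, E, lab)`
under an assignment `a` of the two variables. -/
def C2.sat {d : ℕ} {V : Type} [Fintype V] (E : V → V → Prop) (lab : V → Fin d → Bool) :
    C2 d → (C2Var → V) → Prop
  | .eq s t, a => a s = a t
  | .edge s t, a => E (a s) (a t)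
  | .pred i s, a => lab (a s) i = true
  | .not φ, a => ¬ C2.sat E lab φ a
  | .and φ ψ, a => C2.sat E lab φ a ∧ C2.sat E lab ψ a
  | .or φ ψ, a => C2.sat E lab φ a ∨ C2.sat E lab ψ a
  | .exN k w φ, a => k ≤ Nat.card {u : V | C2.sat E lab φ (Function.update a w u)}

/-- Quantifier nesting depth of a `C²` formula. -/
def C2.depth {d : ℕ} : C2 d → ℕ
  | .eq _ _ => 0
  | .edge _ _ => 0
  | .pred _ _ => 0
  | .not φ => φ.depth
  | .and φ ψ => max φ.depth ψ.depth
  | .or φ ψ => max φ.depth ψ.depth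
  | .exN _ _ φ => φ.depth + 1

/-- Counting rank of a `C²` formula: the maximal `k` occurring in a counting
quantifier `∃_k`. -/
def C2.rank {d : ℕ} : C2 d → ℕ
  | .eq _ _ => 0
  | .edge _ _ => 0
  | .pred _ _ => 0
  | .not φ => φ.rank
  | .and φ ψ => max φ.rank ψ.rank
  | .or φ ψ => max φ.rank ψ.rank
  | .exN k _ φ => max k φ.rank

/-- Free variables of a `C²` formula. -/
def C2.freeVars {d : ℕ} : C2 d → Finset C2Var
  | .eq s t => {s, t}
  | .edge s t => {s, t}
  | .pred _ s => {s}
  | .not φ => φ.freeVars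
  | .and φ ψ => φ.freeVars ∪ ψ.freeVars
  | .or φ ψ => φ.freeVars ∪ ψ.freeVars
  | .exN _ w φ => φ.freeVars.erase w

/-- A strict linear order on a type `V`: an irreflexive, transitive and total
binary relation. -/
def IsStrictLinearOrderRel {V : Type} (E : V → V → Prop) : Prop :=
  (∀ v, ¬ E v v) ∧ (∀ u v w, E u v → E v w → E u w) ∧ (∀ u v : V, u ≠ v → E u v ∨ E v u)

/-- Vertices of the gadgetisation of a directed graph `(V, E)`: a node `v¹_u` for every
`u : V` (left summand) and, for every edge `e` of `E`, a node `v²_e` (right summand with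
second component `false`) and a node `v³_e` (second component `true`). -/
def GadV {V : Type} (E : V → V → Prop) : Type :=
  V ⊕ ({p : V × V // E p.1 p.2} × Bool)

/-- The (symmetric) adjacency relation of the gadgetisation: every edge `(u,w)` of the
original graph is replaced by the undirected path `v¹_u — v²_{(u,w)} — v³_{(u,w)} — v¹_w`. -/
def gadAdj {V : Type} (E : V → V → Prop) : GadV E → GadV E → Prop
  | Sum.inl u, Sum.inr (e, b) => (b = false ∧ e.val.1 = u) ∨ (b = true ∧ e.val.2 = u)
  | Sum.inr (e, b), Sum.inl u => (b = false ∧ e.val.1 = u) ∨ (b = true ∧ e.val.2 = u)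
  | Sum.inr (e, b), Sum.inr (e', b') => e = e' ∧ b ≠ b'
  | Sum.inl _, Sum.inl _ => False

/-- The labelling of the gadgetisation: `v¹`-nodes get label `(1,0,0)`, `v²`-nodes get
`(0,1,0)` and `v³`-nodes get `(0,0,1)`. -/
def gadLab {V : Type} (E : V → V → Prop) : GadV E → Fin 3 → Bool
  | Sum.inl _ => fun i => decide (i = 0)
  | Sum.inr (_, false) => fun i => decide (i = 1)
  | Sum.inr (_, true) => fun i => decide (i = 2)

noncomputable instance GadV.fintype {V : Type} [Fintype V] (E : V → V → Prop) :
    Fintype (GadV E) := by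
  classical
  unfold GadV
  infer_instance

/-- An isomorphism of labelled graphs: an edge-preserving and label-preserving bijection. -/
def IsoLabGraph {V₁ V₂ : Type} {d : ℕ} (E₁ : V₁ → V₁ → Prop) (lab₁ : V₁ → Fin d → Bool)
    (E₂ : V₂ → V₂ → Prop) (lab₂ : V₂ → Fin d → Bool) : Prop :=
  ∃ f : V₁ ≃ V₂, (∀ u v, E₁ u v ↔ E₂ (f u) (f v)) ∧ ∀ v, lab₁ v = lab₂ (f v)

/-- `(W, EH, labH)` is isomorphic to the gadgetisation of some (finite) strict linear
order. -/
def IsGadLin {W : Type} (EH : W → W → Prop) (labH : W → Fin 3 → Bool) : Prop :=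
  ∃ (U : Type) (_ : Fintype U) (R : U → U → Prop),
    IsStrictLinearOrderRel R ∧ IsoLabGraph EH labH (gadAdj R) (gadLab R)

/-- A gadgetised path from `u` to `z` via `w` (a `P₂` node) and `v` (a `P₃` node). -/
def GadPath {V : Type} (E : V → V → Prop) (lab : V → Fin 3 → Bool) (u w v z : V) : Prop :=
  lab u 0 = true ∧ lab w 1 = true ∧ lab v 2 = true ∧ lab z 0 = true ∧
    E u w ∧ E w v ∧ E v z

/-- There is a gadgetised edge from `u` to `z`. -/
def GadEdge {V : Type} (E : V → V → Prop) (lab : V → Fin 3 → Bool) (u z : V) : Prop :=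
  ∃ w v, GadPath E lab u w v z

/-- Condition φ₁: every node satisfies exactly one of `P₁, P₂, P₃`. -/
def phi1 {V : Type} (lab : V → Fin 3 → Bool) : Prop :=
  ∀ v : V,
    (lab v 0 = true ∧ lab v 1 = false ∧ lab v 2 = false) ∨
    (lab v 0 = false ∧ lab v 1 = true ∧ lab v 2 = false) ∨
    (lab v 0 = false ∧ lab v 1 = false ∧ lab v 2 = true)

/-- Condition φ₂: every `P₂`-node has exactly two neighbours, exactly one of them a
`P₁`-node and exactly one a `P₃`-node; every `P₃`-node has exactly two neighbours, exactly
one a `P₁`-node and exactly one a `P₂`-node; and no two `P₁`-nodes are adjacent. -/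
def phi2 {V : Type} [Fintype V] (E : V → V → Prop) (lab : V → Fin 3 → Bool) : Prop :=
  (∀ v : V, lab v 1 = true →
    Nat.card {w | E v w} = 2 ∧ Nat.card {w | E v w ∧ lab w 0 = true} = 1 ∧
      Nat.card {w | E v w ∧ lab w 2 = true} = 1) ∧
  (∀ v : V, lab v 2 = true →
    Nat.card {w | E v w} = 2 ∧ Nat.card {w | E v w ∧ lab w 0 = true} = 1 ∧
      Nat.card {w | E v w ∧ lab w 1 = true} = 1) ∧
  (∀ u v : V, lab u 0 = true → lab v 0 = true → ¬ E u v)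

/-- Condition φ₃: between any two distinct `P₁`-nodes there is exactly one gadgetised edge
in total (from `u` to `z` or from `z` to `u`). -/
def phi3 {V : Type} [Fintype V] (E : V → V → Prop) (lab : V → Fin 3 → Bool) : Prop :=
  ∀ u z : V, lab u 0 = true → lab z 0 = true → u ≠ z →
    Nat.card {p : V × V | GadPath E lab u p.1 p.2 z} +
      Nat.card {p : V × V | GadPath E lab z p.1 p.2 u} = 1

/-- Condition φ₄: there is no triangle of gadgetised edges. -/
def phi4 {V : Type} (E : V → V → Prop) (lab : V → Fin 3 → Bool) : Prop :=
  ¬ ∃ u v w : V, GadEdge E lab u v ∧ GadEdge E lab v w ∧ GadEdge E lab w u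

/-- `N₂ u`: the number of neighbours of `u` satisfying `P₂`. -/
noncomputable def N2 {V : Type} [Fintype V] (E : V → V → Prop) (lab : V → Fin 3 → Bool)
    (u : V) : ℕ :=
  Nat.card {w | E u w ∧ lab w 1 = true}

/-- Condition ψ: for all `0 ≤ i < j < |P₁|` there are `P₁`-nodes `u, w` with `N₂ u = j`,
`N₂ w = i` and a gadgetised edge from `u` to `w`. -/
def psiCond {V : Type} [Fintype V] (E : V → V → Prop) (lab : V → Fin 3 → Bool) : Prop :=
  ∀ i j : ℕ, i < j → j < Nat.card {v : V | lab v 0 = true} →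
    ∃ u w : V, lab u 0 = true ∧ lab w 0 = true ∧
      N2 E lab u = j ∧ N2 E lab w = i ∧ GadEdge E lab u w

/-!
In the gadgetisation of a finite linear order, the vertices at distance at least `c` from both ends
cannot be told apart by `C²` formulas of bounded counting rank and depth: each round of the counting
game with rank `k` costs a margin of `k + 1`, because inside that margin every central vertex has at
least `k` central predecessors and successors. Hence exchanging the targets of two edges `a → b` and
`b → d` between central vertices is invisible: the exchange is a colour-preserving permutation of
gadget nodes, so it changes no counts. But together with the edge `a → d` it creates two gadget
paths from `a` to `d`, which no gadgetisation of a directed graph contains.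
-/

section TruncatedCounting

variable {α β ι : Type*}

/-- The number of elements of colour `q` under the colouring `χ`, truncated at the threshold `k`:
the most that counting quantifiers `∃_j` with `j ≤ k` can see of a colour class. -/
noncomputable def truncCount (k : ℕ) (χ : α → ι) (q : ι) : ℕ :=
  min k {v | χ v = q}.ncard

variable {k : ℕ} {χ : α → ι} {χ' : β → ι}

theorem truncCount_congr (π : α ≃ β) (h : ∀ v, χ' (π v) = χ v) :
    truncCount k χ = truncCount k χ' := by
  funext q
  exact congrArg (min k) <| Set.ncard_congr' <| π.subtypeEquiv fun v => by
    simp only [Set.mem_ofPred_eq, h]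

theorem truncCount_eq_self_of_injective [Finite α] {q : ι} {g : Fin k → α}
    (hg : Function.Injective g) (h : ∀ t, χ (g t) = q) : truncCount k χ q = k := by
  have hcard := Nat.card_le_card_of_injective
    (fun t => (⟨g t, h t⟩ : {v | χ v = q})) fun _ _ hst => hg (congrArg Subtype.val hst)
  rw [Nat.card_fin] at hcard
  exact min_eq_left hcard

theorem truncCount_le_of_injective [Finite β] {f : α → β} (hf : Function.Injective f)
    (h : ∀ v, χ' (f v) = χ v ∨ truncCount k χ' (χ v) = k) (q : ι) :
    truncCount k χ q ≤ truncCount k χ' q := by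
  by_cases hq : truncCount k χ' q = k
  · exact (min_le_left _ _).trans hq.ge
  · refine min_le_min_left k (Set.ncard_le_ncard_of_injOn f ?_ hf.injOn)
    rintro v rfl
    exact (h v).resolve_right hq

theorem le_ncard_of_truncCount_eq [Finite α] [Finite β] (h : truncCount k χ = truncCount k χ')
    {Q : α → Prop} {Q' : β → Prop} (hQ : ∀ v v', χ v = χ' v' → Q v → Q' v') {j : ℕ} (hj : j ≤ k)
    (hjQ : j ≤ {v | Q v}.ncard) : j ≤ {v | Q' v}.ncard := by
  classical
  have := Fintype.ofFinite α
  have := Fintype.ofFinite β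
  -- Either a colour met by `Q` is already frequent enough, or no truncation takes place on the
  -- colours met by `Q` and the class sizes can be summed.
  have class_subset {v} (hv : Q v) : {v' | χ' v' = χ v} ⊆ {v' | Q' v'} :=
    fun v' hv' => hQ v v' hv'.symm hv
  by_cases hlarge : ∃ v, Q v ∧ truncCount k χ' (χ v) = k
  · obtain ⟨v, hv, hk⟩ := hlarge
    exact hj.trans <| (min_eq_left_iff.1 hk).trans <| Set.ncard_le_ncard (class_subset hv)
  · push Not at hlarge
    have class_card {v} (hv : Q v) : {w | χ w = χ v}.ncard = {v' | χ' v' = χ v}.ncard := by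
      have hv' := hlarge v hv
      have hvq := congrFun h (χ v)
      unfold truncCount at hv' hvq
      omega
    have colour_of_mem {v'} (hv' : χ' v' ∈ Finset.image χ {v | Q v}) : Q' v' := by
      obtain ⟨v, hv, hvv'⟩ := Finset.mem_image.1 hv'
      exact hQ v v' hvv' (Finset.mem_filter_univ v |>.1 hv)
    simp only [Set.ncard_eq_toFinset_card', Set.toFinset_ofPred] at hjQ class_card ⊢
    refine hjQ.trans ?_
    calc (Finset.univ.filter Q).card
        = ∑ q ∈ Finset.image χ {v | Q v}, ({v ∈ {v | Q v} | χ v = q} : Finset α).card :=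
          Finset.card_eq_sum_card_image χ _
      _ ≤ ∑ q ∈ Finset.image χ {v | Q v}, ({v' | χ' v' = q} : Finset β).card := by
          refine Finset.sum_le_sum fun q hq => ?_
          obtain ⟨v, hv, rfl⟩ := Finset.mem_image.1 hq
          rw [← class_card (Finset.mem_filter_univ v |>.1 hv)]
          exact Finset.card_le_card (Finset.filter_subset_filter _ (Finset.subset_univ _))
      _ = ({v' | χ' v' ∈ Finset.image χ {v | Q v}} : Finset β).card :=
          Finset.sum_card_fiberwise_eq_card_filter _ _ _
      _ ≤ (Finset.univ.filter Q').card :=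
          Finset.card_le_card (Finset.monotone_filter_right _ fun v' _ => colour_of_mem)

theorem le_ncard_iff_of_truncCount_eq [Finite α] [Finite β]
    (h : truncCount k χ = truncCount k χ') {Q : α → Prop} {Q' : β → Prop}
    (hQ : ∀ v v', χ v = χ' v' → (Q v ↔ Q' v')) {j : ℕ} (hj : j ≤ k) :
    j ≤ {v | Q v}.ncard ↔ j ≤ {v | Q' v}.ncard :=
  ⟨le_ncard_of_truncCount_eq h (fun v v' hv => (hQ v v' hv).1) hj,
    le_ncard_of_truncCount_eq h.symm (fun v' v hv => (hQ v v' hv.symm).2) hj⟩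

end TruncatedCounting

section BackAndForth

variable {V V' : Type} {K : Type*} {d : ℕ} {E : V → V → Prop} {E' : V' → V' → Prop}
  {lab : V → Fin d → Bool} {lab' : V' → Fin d → Bool}

instance : Nontrivial C2Var :=
  ⟨.x, .y, by decide⟩

theorem C2Var.eq_of_ne_of_ne {r s w : C2Var} (hr : r ≠ w) (hs : s ≠ w) : r = s := by
  cases r <;> cases s <;> cases w <;> first | rfl | contradiction

/-- The colour of `v` as seen from `u`: its colour under `κ` together with the atomic relation
between `u` and `v`. -/
def pairColour (E : V → V → Prop) (κ : V → K) (u v : V) : K × Prop × Prop :=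
  (κ v, u = v, E u v)

theorem pairColour_eq_iff {κ : V → K} {κ' : V' → K} {u v : V} {u' v' : V'} :
    pairColour E κ u v = pairColour E' κ' u' v' ↔
      κ v = κ' v' ∧ (u = v ↔ u' = v') ∧ (E u v ↔ E' u' v') := by
  simp only [pairColour, Prod.mk.injEq, eq_iff_iff]

/-- The positions `a` and `a'` of the two pebbles agree in colour and in their atomic relations. -/
def SamePairColours (E : V → V → Prop) (E' : V' → V' → Prop) (κ : V → K) (κ' : V' → K)
    (a : C2Var → V) (a' : C2Var → V') : Prop :=
  ∀ s t, pairColour E κ (a s) (a t) = pairColour E' κ' (a' s) (a' t)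

theorem SamePairColours.update [Std.Symm E] [Std.Symm E'] [Std.Irrefl E] [Std.Irrefl E']
    {κ : V → K} {κ' : V' → K}
    {a : C2Var → V} {a' : C2Var → V'} (h : SamePairColours E E' κ κ' a a')
    (w : C2Var) {v : V} {v' : V'}
    (hv : ∀ s ≠ w, pairColour E κ (a s) v = pairColour E' κ' (a' s) v') :
    SamePairColours E E' κ κ' (Function.update a w v) (Function.update a' w v') := by
  have hv' : ∀ s ≠ w, κ v = κ' v' ∧ (a s = v ↔ a' s = v') ∧ (E (a s) v ↔ E' (a' s) v') :=
    fun s hs => pairColour_eq_iff.1 (hv s hs)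
  intro s t
  by_cases hs : s = w <;> by_cases ht : t = w
  · obtain ⟨r, hr⟩ : ∃ r, r ≠ w := exists_ne w
    subst hs ht
    simp only [Function.update_self, pairColour, (hv' r hr).1, irrefl_of]
  · subst hs
    obtain ⟨-, heq, hadj⟩ := hv' t ht
    have hκ : κ (a t) = κ' (a' t) := (pairColour_eq_iff.1 (h t t)).1
    simp only [Function.update_self, Function.update_of_ne ht, pairColour_eq_iff]
    exact ⟨hκ, by rw [eq_comm, heq, eq_comm], by rw [comm_of E, hadj, comm_of E']⟩
  · subst ht
    simpa only [Function.update_self, Function.update_of_ne hs] using hv s hs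
  · simpa only [Function.update_of_ne hs, Function.update_of_ne ht] using h s t

theorem SamePairColours.mono {L : Type*} {κ : V → K} {κ' : V' → K} {μ : V → L} {μ' : V' → L}
    {a : C2Var → V} {a' : C2Var → V'} (h : SamePairColours E E' κ κ' a a')
    (hμ : ∀ {u u'}, κ u = κ' u' → μ u = μ' u') : SamePairColours E E' μ μ' a a' := fun s t =>
  have hst := pairColour_eq_iff.1 (h s t)
  pairColour_eq_iff.2 ⟨hμ hst.1, hst.2⟩

/-- Colourings `κ i`, `κ' i` for `i ≤ m`, finer as `i` grows, such that nodes of equal colour at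
stage `i + 1` see every colour of stage `i` equally often up to the threshold `k`. They witness that
Duplicator survives `m` rounds of the two-pebble counting game with counting rank `k`. -/
structure TruncRefinement (k m : ℕ) (E : V → V → Prop) (lab : V → Fin d → Bool)
    (E' : V' → V' → Prop) (lab' : V' → Fin d → Bool) (κ : ℕ → V → K) (κ' : ℕ → V' → K) :
    Prop where
  lab_eq : ∀ {i u u'}, κ i u = κ' i u' → lab u = lab' u'
  mono : ∀ {i u u'}, κ (i + 1) u = κ' (i + 1) u' → κ i u = κ' i u'
  truncCount_eq : ∀ {i u u'}, i < m → κ (i + 1) u = κ' (i + 1) u' →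
    truncCount k (pairColour E (κ i) u) = truncCount k (pairColour E' (κ' i) u')

theorem TruncRefinement.sat_iff [Fintype V] [Fintype V'] {k m : ℕ} {κ : ℕ → V → K}
    {κ' : ℕ → V' → K} (hκ : TruncRefinement k m E lab E' lab' κ κ')
    [Std.Symm E] [Std.Symm E'] [Std.Irrefl E] [Std.Irrefl E']
    {φ : C2 d} (hrank : φ.rank ≤ k) {i : ℕ} (hdepth : φ.depth ≤ i) (hi : i ≤ m)
    {a : C2Var → V} {a' : C2Var → V'} (h : SamePairColours E E' (κ i) (κ' i) a a') :
    C2.sat E lab φ a ↔ C2.sat E' lab' φ a' := by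
  induction φ generalizing i a a' with
  | eq s t => exact (pairColour_eq_iff.1 (h s t)).2.1
  | edge s t => exact (pairColour_eq_iff.1 (h s t)).2.2
  | pred p s => simp only [C2.sat, hκ.lab_eq (pairColour_eq_iff.1 (h s s)).1]
  | not φ ih => exact not_congr (ih hrank hdepth hi h)
  | and φ ψ ihφ ihψ =>
    rw [C2.rank, max_le_iff] at hrank
    rw [C2.depth, max_le_iff] at hdepth
    exact and_congr (ihφ hrank.1 hdepth.1 hi h) (ihψ hrank.2 hdepth.2 hi h)
  | or φ ψ ihφ ihψ =>
    rw [C2.rank, max_le_iff] at hrank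
    rw [C2.depth, max_le_iff] at hdepth
    exact or_congr (ihφ hrank.1 hdepth.1 hi h) (ihψ hrank.2 hdepth.2 hi h)
  | exN j w φ ih =>
    rw [C2.rank, max_le_iff] at hrank
    obtain ⟨i, rfl⟩ : ∃ i', i = i' + 1 := Nat.exists_eq_succ_of_ne_zero (by
      rw [C2.depth] at hdepth; omega)
    obtain ⟨r, hr⟩ : ∃ r, r ≠ w := exists_ne w
    have hcount := hκ.truncCount_eq hi (pairColour_eq_iff.1 (h r r)).1
    refine le_ncard_iff_of_truncCount_eq hcount (fun v v' hv => ?_) hrank.1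
    refine ih hrank.2 (Nat.le_of_succ_le_succ hdepth) (Nat.le_of_succ_le hi)
      ((h.mono hκ.mono).update w fun s hs => ?_)
    rwa [C2Var.eq_of_ne_of_ne hs hr]

end BackAndForth

section MultigraphGadget

/-- Adjacency of the gadgetisation of the directed multigraph on `V` whose edges `e : D` run from
`p (e, false)` to `p (e, true)`. The gadget nodes `v²_e` and `v³_e` are encoded as `(e, false)` and
`(e, true)`, so that `p` sends a gadget node to the unique vertex of `V` it is attached to. -/
def multiGadAdj {V D : Type*} (p : D × Bool → V) : V ⊕ D × Bool → V ⊕ D × Bool → Prop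
  | .inl u, .inr x => p x = u
  | .inr x, .inl u => p x = u
  | .inr x, .inr y => x.1 = y.1 ∧ x.2 ≠ y.2
  | .inl _, .inl _ => False

/-- The labelling of the nodes of a multigraph gadgetisation by `(1,0,0)`, `(0,1,0)`, `(0,0,1)`. -/
def multiGadLab {V D : Type*} : V ⊕ D × Bool → Fin 3 → Bool
  | .inl _ => fun i => decide (i = 0)
  | .inr (_, false) => fun i => decide (i = 1)
  | .inr (_, true) => fun i => decide (i = 2)

instance {V D : Type*} (p : D × Bool → V) : Std.Symm (multiGadAdj p) where
  symm
    | .inl _, .inr _, h => h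
    | .inr _, .inl _, h => h
    | .inr _, .inr _, h => ⟨h.1.symm, h.2.symm⟩

instance {V D : Type*} (p : D × Bool → V) : Std.Irrefl (multiGadAdj p) where
  irrefl
    | .inl _ => id
    | .inr _ => fun h => h.2 rfl

theorem right_eq_swap_apply_iff {α : Type*} [DecidableEq α] {x y v : α} :
    y = Equiv.swap x y v ↔ x = v := by
  rw [eq_comm, Equiv.swap_apply_eq_iff, Equiv.swap_apply_right, eq_comm]

variable {V D : Type} {K L : Type*} {k : ℕ} {p : D × Bool → V} {κ : V → K} {δ : D × Bool → L}

theorem truncCount_pairColour_comp_perm {τ : Equiv.Perm (D × Bool)} (hδ : ∀ x, δ (τ x) = δ x)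
    (hκ : ∀ x, κ (p (τ x)) = κ (p x)) (u : V ⊕ D × Bool) :
    truncCount k (pairColour (multiGadAdj p) (Sum.map κ δ) u) =
      truncCount k (pairColour (multiGadAdj (p ∘ τ)) (Sum.map κ δ) u) := by
  classical
  -- A vertex's view is restored by relabelling the gadget nodes along `τ`, a gadget node's view by
  -- exchanging its old and its new endpoint.
  rcases u with u | x
  · refine truncCount_congr ((Equiv.refl V).sumCongr τ.symm) ?_
    rintro (v | y)
    · rfl
    · have hδy : δ (τ.symm y) = δ y := by rw [← hδ, τ.apply_symm_apply]
      simp [pairColour, multiGadAdj, hδy]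
  · refine truncCount_congr ((Equiv.swap (p x) (p (τ x))).sumCongr (Equiv.refl _)) ?_
    rintro (v | y)
    · have hκv := Equiv.apply_swap_eq_self (hκ x).symm v
      exact pairColour_eq_iff.2 ⟨congrArg Sum.inl hκv, iff_of_false Sum.inr_ne_inl Sum.inr_ne_inl,
        right_eq_swap_apply_iff⟩
    · rfl

theorem truncCount_pairColour_gadgetNode {e e' : D} {b : Bool} (hδ : ∀ b, δ (e, b) = δ (e', b))
    (hκ : κ (p (e, b)) = κ (p (e', b))) :
    truncCount k (pairColour (multiGadAdj p) (Sum.map κ δ) (.inr (e, b))) =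
      truncCount k (pairColour (multiGadAdj p) (Sum.map κ δ) (.inr (e', b))) := by
  classical
  refine truncCount_congr ((Equiv.swap (p (e, b)) (p (e', b))).sumCongr
    ((Equiv.swap e e').prodCongr (Equiv.refl Bool))) ?_
  rintro (v | ⟨f, b'⟩)
  · have hκv := Equiv.apply_swap_eq_self hκ v
    exact pairColour_eq_iff.2 ⟨congrArg Sum.inl hκv, iff_of_false Sum.inr_ne_inl Sum.inr_ne_inl,
      right_eq_swap_apply_iff⟩
  · have hδf : δ (Equiv.swap e e' f, b') = δ (f, b') :=
      Equiv.apply_swap_eq_self (v := fun e => δ (e, b')) (hδ b') f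
    simp [pairColour, multiGadAdj, hδf, right_eq_swap_apply_iff]

/-- The labelled graph `(E, lab)` is isomorphic to the gadgetisation of some directed graph. -/
def IsGad (E : V → V → Prop) (lab : V → Fin 3 → Bool) : Prop :=
  ∃ (U : Type) (R : U → U → Prop), IsoLabGraph E lab (gadAdj R) (gadLab R)

theorem IsGadLin.isGad {E : V → V → Prop} {lab : V → Fin 3 → Bool} (h : IsGadLin E lab) :
    IsGad E lab :=
  let ⟨U, _, R, _, hR⟩ := h
  ⟨U, R, hR⟩

theorem GadPath.exists_edge_of_gad {R : V → V → Prop} {u w v z : GadV R}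
    (h : GadPath (gadAdj R) (gadLab R) u w v z) :
    ∃ e : {e : V × V // R e.1 e.2}, u = .inl e.1.1 ∧ w = .inr (e, false) ∧ z = .inl e.1.2 := by
  obtain ⟨hu, hw, hv, hz, huw, hwv, hvz⟩ := h
  obtain u | ⟨_, _ | _⟩ := u <;> [skip; cases hu; cases hu]
  obtain _ | ⟨e, _ | _⟩ := w <;> [cases hw; skip; cases hw]
  obtain _ | ⟨_, _ | _⟩ := v <;> [cases hv; cases hv; skip]
  obtain z | ⟨_, _ | _⟩ := z <;> [skip; cases hz; cases hz]
  simp only [gadAdj, true_and, false_and, or_false, false_or, reduceCtorEq] at huw hvz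
  exact ⟨e, by rw [huw], rfl, by rw [hwv.1, hvz]⟩

theorem IsGad.gadPath_unique {E : V → V → Prop} {lab : V → Fin 3 → Bool} (hG : IsGad E lab)
    {u w v w' v' z : V} (h : GadPath E lab u w v z) (h' : GadPath E lab u w' v' z) : w = w' := by
  obtain ⟨U, R, f, hadj, hlab⟩ := hG
  simp only [GadPath, hadj, hlab] at h h'
  obtain ⟨e, hu, hw, hz⟩ := GadPath.exists_edge_of_gad h
  obtain ⟨e', hu', hw', hz'⟩ := GadPath.exists_edge_of_gad h'
  have hee' : e = e' := Subtype.ext <| Prod.ext (Sum.inl_injective (hu.symm.trans hu'))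
    (Sum.inl_injective (hz.symm.trans hz'))
  exact f.injective (by rw [hw, hw', hee'])

theorem gadPath_multiGadAdj (p : D × Bool → V) (e : D) :
    GadPath (multiGadAdj p) multiGadLab (.inl (p (e, false))) (.inr (e, false)) (.inr (e, true))
      (.inl (p (e, true))) := by
  simp [GadPath, multiGadAdj, multiGadLab]

theorem not_isGad_multiGadAdj {e e' : D} (hne : e ≠ e') (hsrc : p (e, false) = p (e', false))
    (htgt : p (e, true) = p (e', true)) : ¬ IsGad (multiGadAdj p) multiGadLab := by
  intro hG
  have hpath := gadPath_multiGadAdj p e'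
  rw [← hsrc, ← htgt] at hpath
  have hnode := hG.gadPath_unique (gadPath_multiGadAdj p e) hpath
  exact hne (congrArg Prod.fst (Sum.inr_injective hnode))

end MultigraphGadget

section LinearOrderGadget

/-- The edges of the strict linear order on `V`. -/
abbrev OrderEdge (V : Type*) [LT V] : Type _ :=
  {e : V × V // e.1 < e.2}

/-- The vertex a gadget node is attached to: the source of the edge for `v²`-nodes `(e, false)`, its
target for `v³`-nodes `(e, true)`. -/
def OrderEdge.endpoint {V : Type*} [LT V] : OrderEdge V × Bool → V
  | (e, false) => e.1.1
  | (e, true) => e.1.2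

theorem isGadLin_multiGadAdj_endpoint (V : Type) [Finite V] [LinearOrder V] :
    IsGadLin (multiGadAdj (OrderEdge.endpoint (V := V))) multiGadLab := by
  refine ⟨V, Fintype.ofFinite V, (· < ·),
    ⟨lt_irrefl, fun _ _ _ => lt_trans, fun _ _ => lt_or_gt_of_ne⟩,
    Equiv.refl (GadV (· < ·)), ?_, ?_⟩
  · change ∀ u v : V ⊕ OrderEdge V × Bool,
      multiGadAdj OrderEdge.endpoint u v ↔ gadAdj (· < ·) u v
    rintro (u | ⟨e, _ | _⟩) (v | ⟨f, _ | _⟩) <;>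
      simp [multiGadAdj, gadAdj, OrderEdge.endpoint]
  · rintro (u | ⟨e, _ | _⟩) <;> rfl

/-- The action of a permutation of `V` on two-element subsets, transported to `OrderEdge V` by
listing the smaller element first. -/
def OrderEdge.map {V : Type*} [LinearOrder V] (σ : Equiv.Perm V) (e : OrderEdge V) :
    OrderEdge V :=
  if h : σ e.1.1 < σ e.1.2 then ⟨(σ e.1.1, σ e.1.2), h⟩
  else ⟨(σ e.1.2, σ e.1.1), (le_of_not_gt h).lt_of_ne (σ.injective.ne e.2.ne')⟩

theorem OrderEdge.map_injective {V : Type*} [LinearOrder V] (σ : Equiv.Perm V) :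
    Function.Injective (OrderEdge.map σ) := by
  rintro ⟨⟨a, b⟩, hab⟩ ⟨⟨c, d⟩, hcd⟩ h
  simp only [OrderEdge.map] at h
  split_ifs at h with h₁ h₂ h₂ <;>
    simp only [Subtype.mk.injEq, Prod.mk.injEq, σ.injective.eq_iff] at h ⊢ <;> grind

theorem OrderEdge.endpoint_map {V : Type*} [LinearOrder V] {σ : Equiv.Perm V} {e : OrderEdge V}
    (h : σ e.1.1 < σ e.1.2) (b : Bool) :
    OrderEdge.endpoint (OrderEdge.map σ e, b) = σ (OrderEdge.endpoint (e, b)) := by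
  rw [OrderEdge.map, dif_pos h]
  cases b <;> rfl

/-- The distances of a position to the two ends of `Fin n`, truncated at `c`. In the gadgetised
linear order these are the truncated in-degree and out-degree, and truncation merges exactly the
positions at distance at least `c` from both ends. -/
def truncPos {n : ℕ} (c : ℕ) (a : Fin n) : ℕ × ℕ :=
  (min c a, min c a.rev)

variable {n c c' k : ℕ} {a b : Fin n}

theorem truncPos_eq_of_le (hc : c ≤ c') (h : truncPos c' a = truncPos c' b) :
    truncPos c a = truncPos c b := by
  simp only [truncPos, Prod.mk.injEq] at h ⊢
  omega

theorem truncPos_eq_diag_iff : truncPos c a = (c, c) ↔ c ≤ a ∧ a + c < n := by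
  simp only [truncPos, Prod.mk.injEq, min_eq_left_iff, Fin.val_rev]
  omega

theorem eq_or_truncPos_eq_diag (h : truncPos c a = truncPos c b) :
    a = b ∨ truncPos c a = (c, c) := by
  simp only [truncPos, Prod.mk.injEq, Fin.val_rev, Fin.ext_iff] at h ⊢
  omega

theorem swap_lt_swap_of_truncPos_eq_diag (ha : truncPos c a = (c, c))
    (hb : truncPos c b = (c, c)) {u v : Fin n} (huv : u < v)
    (h : ¬ (truncPos c u = (c, c) ∧ truncPos c v = (c, c))) :
    Equiv.swap a b u < Equiv.swap a b v := by
  simp only [truncPos_eq_diag_iff] at ha hb h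
  simp only [Equiv.swap_apply_def]
  split_ifs <;> omega

/-- The truncated positions of both ends of a gadget node's edge, and the kind of the node. -/
def endColour (c : ℕ) : OrderEdge (Fin n) × Bool → ((ℕ × ℕ) × (ℕ × ℕ)) × Bool :=
  Prod.map (fun e => (truncPos c e.1.1, truncPos c e.1.2)) id

/-- The colour of a node of the gadgetised order at truncation `c`. -/
def gadColour (c : ℕ) : Fin n ⊕ OrderEdge (Fin n) × Bool →
    (ℕ × ℕ) ⊕ ((ℕ × ℕ) × (ℕ × ℕ)) × Bool :=
  Sum.map (truncPos c) (endColour c)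

theorem endColour_eq_of_le {x y : OrderEdge (Fin n) × Bool} (hc : c ≤ c')
    (h : endColour c' x = endColour c' y) : endColour c x = endColour c y := by
  obtain ⟨hends, hkind⟩ := Prod.ext_iff.1 h
  obtain ⟨hsrc, htgt⟩ := Prod.ext_iff.1 hends
  exact Prod.ext (Prod.ext (truncPos_eq_of_le hc hsrc) (truncPos_eq_of_le hc htgt)) hkind

theorem gadColour_eq_of_le {u v : Fin n ⊕ OrderEdge (Fin n) × Bool} (hc : c ≤ c')
    (h : gadColour c' u = gadColour c' v) : gadColour c u = gadColour c v := by
  rcases u with u | x <;> rcases v with v | y <;>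
    simp only [gadColour, Sum.map_inl, Sum.map_inr, Sum.inl.injEq, Sum.inr.injEq, reduceCtorEq]
      at h ⊢
  · exact truncPos_eq_of_le hc h
  · exact endColour_eq_of_le hc h

theorem truncPos_endpoint_eq {x y : OrderEdge (Fin n) × Bool} (h : endColour c x = endColour c y) :
    truncPos c (OrderEdge.endpoint x) = truncPos c (OrderEdge.endpoint y) := by
  obtain ⟨e, b⟩ := x
  obtain ⟨e', b'⟩ := y
  simp only [endColour, Prod.map_apply, id_eq, Prod.mk.injEq] at h
  obtain ⟨⟨hsrc, htgt⟩, rfl⟩ := h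
  cases b <;> assumption

theorem multiGadLab_eq_of_gadColour_eq {u v : Fin n ⊕ OrderEdge (Fin n) × Bool}
    (h : gadColour c u = gadColour c v) : multiGadLab u = multiGadLab v := by
  rcases u with u | ⟨e, b⟩ <;> rcases v with v | ⟨e', b'⟩ <;>
    simp only [gadColour, endColour, Sum.map_inl, Sum.map_inr, Prod.map_apply, id_eq,
      Sum.inr.injEq, Prod.mk.injEq, reduceCtorEq] at h
  · rfl
  · obtain ⟨-, rfl⟩ := h
    cases b <;> rfl

theorem endColour_eq_diag {e : OrderEdge (Fin n)} (hsrc : c ≤ e.1.1) (htgt : e.1.2 + c < n)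
    (b : Bool) : endColour c (e, b) = (((c, c), (c, c)), b) := by
  have hlt := Fin.lt_def.1 e.2
  have h₁ : truncPos c e.1.1 = (c, c) :=
    truncPos_eq_diag_iff.2 ⟨hsrc, (Nat.add_lt_add_right hlt c).trans htgt⟩
  have h₂ : truncPos c e.1.2 = (c, c) := truncPos_eq_diag_iff.2 ⟨hsrc.trans hlt.le, htgt⟩
  simp only [endColour, Prod.map_apply, id_eq, h₁, h₂]

theorem exists_injective_central_orderEdge {i : Fin n}
    (hi : truncPos (c + k + 1) i = (c + k + 1, c + k + 1)) (b : Bool) (P : Prop) :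
    ∃ g : Fin k → OrderEdge (Fin n), Function.Injective g ∧ ∀ t,
      endColour c (g t, b) = (((c, c), (c, c)), b) ∧ (OrderEdge.endpoint (g t, b) = i ↔ P) := by
  obtain ⟨hci, hin⟩ := truncPos_eq_diag_iff.1 hi
  obtain ⟨x, y, hxy, hinj⟩ : ∃ x y : Fin k → ℕ,
      (∀ t, c ≤ x t ∧ x t < y t ∧ y t + c < n ∧ ((bif b then y t else x t) = i ↔ P)) ∧
      ∀ s t, x s = x t → y s = y t → s = t := by
    by_cases hP : P <;> cases b
    · exact ⟨fun _ => i, fun t => i + 1 + t, by grind, by grind⟩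
    · exact ⟨fun t => i - 1 - t, fun _ => i, by grind, by grind⟩
    all_goals exact ⟨fun _ => c, fun t => c + 1 + t, by grind, by grind⟩
  have hx (t) : x t < n := by grind
  have hy (t) : y t < n := by grind
  refine ⟨fun t => ⟨(⟨x t, hx t⟩, ⟨y t, hy t⟩), (hxy t).2.1⟩, fun s t hst => ?_, fun t =>
    ⟨endColour_eq_diag (hxy t).1 (hxy t).2.2.1 b, ?_⟩⟩
  · simp only [Subtype.mk.injEq, Prod.mk.injEq, Fin.mk.injEq] at hst
    exact hinj s t hst.1 hst.2
  · refine Iff.trans ?_ (hxy t).2.2.2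
    cases b <;> exact Fin.ext_iff

theorem truncCount_pairColour_vertex_eq_self {i : Fin n}
    (hi : truncPos (c + k + 1) i = (c + k + 1, c + k + 1)) (b : Bool) (P : Prop) :
    truncCount k (pairColour (multiGadAdj OrderEdge.endpoint) (gadColour c) (.inl i))
      (.inr (((c, c), (c, c)), b), False, P) = k := by
  obtain ⟨g, hg, hgP⟩ := exists_injective_central_orderEdge hi b P
  refine truncCount_eq_self_of_injective (g := fun t => .inr (g t, b)) (fun s t hst => hg ?_)
    fun t => ?_
  · exact congrArg Prod.fst (Sum.inr_injective hst)
  · simp [pairColour, gadColour, multiGadAdj, hgP]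

theorem truncCount_pairColour_vertex_le {i i' : Fin n}
    (hi : truncPos (c + k + 1) i = (c + k + 1, c + k + 1))
    (hi' : truncPos (c + k + 1) i' = (c + k + 1, c + k + 1)) :
    truncCount k (pairColour (multiGadAdj OrderEdge.endpoint) (gadColour c) (.inl i)) ≤
      truncCount k (pairColour (multiGadAdj OrderEdge.endpoint) (gadColour c) (.inl i')) := by
  have central {j : Fin n} (hj : truncPos (c + k + 1) j = (c + k + 1, c + k + 1)) :
      truncPos c j = (c, c) := by
    rw [truncPos_eq_diag_iff] at hj ⊢
    omega
  have hic := central hi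
  have hic' := central hi'
  refine truncCount_le_of_injective (f := Sum.map (Equiv.swap i i')
    (Prod.map (OrderEdge.map (Equiv.swap i i')) id)) ?_ ?_
  · exact (Equiv.injective _).sumMap ((OrderEdge.map_injective _).prodMap Function.injective_id)
  rintro (v | ⟨e, b⟩)
  · exact .inl <| pairColour_eq_iff.2 ⟨congrArg Sum.inl
      (Equiv.apply_swap_eq_self (hic.trans hic'.symm) v),
      by simp only [Sum.map_inl, Sum.inl.injEq, right_eq_swap_apply_iff], Iff.rfl⟩
  -- The swap may reverse an edge and so change which end it has at `i`, but this only happens to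
  -- edges between central positions, and their colours occur at least `k` times.
  by_cases he : truncPos c e.1.1 = (c, c) ∧ truncPos c e.1.2 = (c, c)
  · right
    have hcol : pairColour (multiGadAdj OrderEdge.endpoint) (gadColour c) (.inl i) (.inr (e, b)) =
        (.inr (((c, c), (c, c)), b), False, OrderEdge.endpoint (e, b) = i) := by
      simp [pairColour, gadColour, endColour, multiGadAdj, he]
    rw [hcol]
    exact truncCount_pairColour_vertex_eq_self hi' b _
  · left
    have hlt := swap_lt_swap_of_truncPos_eq_diag hic hic' e.2 he
    have hsrc := Equiv.apply_swap_eq_self (hic.trans hic'.symm) e.1.1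
    have htgt := Equiv.apply_swap_eq_self (hic.trans hic'.symm) e.1.2
    refine pairColour_eq_iff.2 ⟨?_, iff_of_false Sum.inl_ne_inr Sum.inl_ne_inr, ?_⟩
    · simp [gadColour, endColour, OrderEdge.map, hlt, hsrc, htgt]
    · change OrderEdge.endpoint (OrderEdge.map _ e, b) = i' ↔ OrderEdge.endpoint (e, b) = i
      rw [OrderEdge.endpoint_map hlt, eq_comm, right_eq_swap_apply_iff, eq_comm]

theorem truncCount_eq_of_gadColour_eq {u u' : Fin n ⊕ OrderEdge (Fin n) × Bool}
    (h : gadColour (c + k + 1) u = gadColour (c + k + 1) u') :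
    truncCount k (pairColour (multiGadAdj OrderEdge.endpoint) (gadColour c) u) =
      truncCount k (pairColour (multiGadAdj OrderEdge.endpoint) (gadColour c) u') := by
  rcases u with i | ⟨e, b⟩ <;> rcases u' with i' | ⟨e', b'⟩ <;>
    simp only [gadColour, Sum.map_inl, Sum.map_inr, reduceCtorEq, Sum.inl.injEq, Sum.inr.injEq] at h
  · obtain rfl | hi := eq_or_truncPos_eq_diag h
    · rfl
    · exact le_antisymm (truncCount_pairColour_vertex_le hi (h ▸ hi))
        (truncCount_pairColour_vertex_le (h ▸ hi) hi)
  · have hc : endColour c (e, b) = endColour c (e', b') := endColour_eq_of_le (by omega) h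
    obtain rfl : b = b' := congrArg Prod.snd hc
    have hends (b'') : endColour c (e, b'') = endColour c (e', b'') :=
      Prod.ext (Prod.ext_iff.1 hc).1 rfl
    exact truncCount_pairColour_gadgetNode hends (truncPos_endpoint_eq hc)

end LinearOrderGadget

section Indistinguishability

variable {k m : ℕ}

theorem truncRefinement_gadColour {n : ℕ} {τ : Equiv.Perm (OrderEdge (Fin n) × Bool)}
    (hτ : ∀ x, endColour (m * (k + 1)) (τ x) = endColour (m * (k + 1)) x) :
    TruncRefinement k m (multiGadAdj (OrderEdge.endpoint (V := Fin n))) multiGadLab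
      (multiGadAdj (OrderEdge.endpoint ∘ τ)) multiGadLab
      (fun i => gadColour (i * (k + 1))) (fun i => gadColour (i * (k + 1))) where
  lab_eq := multiGadLab_eq_of_gadColour_eq
  mono := gadColour_eq_of_le (Nat.mul_le_mul_right _ (Nat.le_succ _))
  truncCount_eq {i u u'} hi h := by
    rw [Nat.succ_mul, ← add_assoc] at h
    have hτi (x) : endColour (i * (k + 1)) (τ x) = endColour (i * (k + 1)) x :=
      endColour_eq_of_le (Nat.mul_le_mul_right _ hi.le) (hτ x)
    exact (truncCount_eq_of_gadColour_eq h).trans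
      (truncCount_pairColour_comp_perm hτi (fun x => truncPos_endpoint_eq (hτi x)) u')

theorem exists_perm_not_isGad (c : ℕ) :
    ∃ τ : Equiv.Perm (OrderEdge (Fin (2 * c + 3)) × Bool),
      (∀ x, endColour c (τ x) = endColour c x) ∧
        ¬ IsGad (multiGadAdj (OrderEdge.endpoint ∘ τ)) multiGadLab := by
  let a : Fin (2 * c + 3) := ⟨c, by omega⟩
  let b : Fin (2 * c + 3) := ⟨c + 1, by omega⟩
  let d : Fin (2 * c + 3) := ⟨c + 2, by omega⟩
  let ab : OrderEdge (Fin (2 * c + 3)) := ⟨(a, b), Fin.lt_def.2 (by grind)⟩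
  let bd : OrderEdge (Fin (2 * c + 3)) := ⟨(b, d), Fin.lt_def.2 (by grind)⟩
  let ad : OrderEdge (Fin (2 * c + 3)) := ⟨(a, d), Fin.lt_def.2 (by grind)⟩
  have hab_ad : ab ≠ ad := by simp [ab, ad, b, d]
  have had_bd : ad ≠ bd := by simp [ad, bd, a, b]
  refine ⟨Equiv.swap (ab, true) (bd, true), Equiv.apply_swap_eq_self ?_,
    not_isGad_multiGadAdj hab_ad ?_ ?_⟩
  · rw [endColour_eq_diag, endColour_eq_diag] <;> grind
  · have hab : Equiv.swap (ab, true) (bd, true) (ab, false) = (ab, false) :=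
      Equiv.swap_apply_of_ne_of_ne (by simp) (by simp)
    have had : Equiv.swap (ab, true) (bd, true) (ad, false) = (ad, false) :=
      Equiv.swap_apply_of_ne_of_ne (by simp) (by simp)
    simp only [Function.comp_apply, hab, had, OrderEdge.endpoint, ab, ad]
  · have had : Equiv.swap (ab, true) (bd, true) (ad, true) = (ad, true) :=
      Equiv.swap_apply_of_ne_of_ne (by simp [hab_ad.symm]) (by simp [had_bd])
    simp only [Function.comp_apply, Equiv.swap_apply_left, had, OrderEdge.endpoint, bd, ad]

end Indistinguishability

theorem stmt14_general :
    ¬ ∃ φ : C2 3, ∀ (V : Type) [Fintype V] (E : V → V → Prop),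
      (∀ u v, E u v → E v u) → (∀ v, ¬ E v v) → ∀ (lab : V → Fin 3 → Bool) (v : V),
        (IsGadLin E lab → C2.sat E lab φ (fun _ => v)) ∧
          (C2.sat E lab φ (fun _ => v) → IsGad E lab) := by
  rintro ⟨φ, hφ⟩
  obtain ⟨τ, hτ, hnot⟩ := exists_perm_not_isGad (φ.depth * (φ.rank + 1))
  have hsat := (truncRefinement_gadColour hτ).sat_iff le_rfl le_rfl le_rfl
    (a := fun _ => .inl 0) (a' := fun _ => .inl 0) fun _ _ => rfl
  exact hnot <| (hφ _ _ (fun _ _ => symm_of _) (irrefl_of _) _ _).2 <| hsat.1 <|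
    (hφ _ _ (fun _ _ => symm_of _) (irrefl_of _) _ _).1 <| isGadLin_multiGadAdj_endpoint _

/-- there is no `C²` formula `φ(x)` with one free variable (over the
signature with `E, P₁, P₂, P₃`) such that, over all finite undirected labelled graphs of
dimension 3, `φ` holds at a node iff the graph is isomorphic to the gadgetisation of a
strict linear order. -/
theorem stmt14 :
    ¬ ∃ φ : C2 3, φ.freeVars = {C2Var.x} ∧
      ∀ (V : Type) [Fintype V] (E : V → V → Prop),
        (∀ u v, E u v → E v u) → (∀ v, ¬ E v v) →
        ∀ (lab : V → Fin 3 → Bool) (v : V),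
          (C2.sat E lab φ (fun _ => v) ↔ IsGadLin E lab) :=
  fun ⟨φ, _, hφ⟩ => stmt14_general ⟨φ, fun V _ E hsymm hirrefl lab v =>
    ⟨(hφ V E hsymm hirrefl lab v).2, fun h => ((hφ V E hsymm hirrefl lab v).1 h).isGad⟩⟩
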